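/- Let A ∈ ℝ^{n×n} be nonsingular and 1 ≤ k ≤ d(A) − 1. Let b be a unit norm k-th worst-case GMRES initial vector with k-th GMRES polynomial p_k ∈ π_k and residual r_k = p_k(A)b. Then p_k is also the k-th GMRES polynomial of Aᵀ and the initial vector r_k/‖r_k‖; consequently p_k(Aᵀ)p_k(A)b = Ψ_k(A)² b. -/

import Mathlib

open Polynomial Matrix

/-- The Euclidean norm of a real vector. -/
noncomputable def euclNorm {ι : Type*} [Fintype ι] (v : ι → ℝ) : ℝ :=
  Real.sqrt (∑ i, v i ^ 2)

/-- The Euclidean norm of a complex vector. -/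
noncomputable def euclNormC {ι : Type*} [Fintype ι] (v : ι → ℂ) : ℝ :=
  Real.sqrt (∑ i, ‖v i‖ ^ 2)

/-- The Euclidean inner product of two real vectors. -/
noncomputable def edot {ι : Type*} [Fintype ι] (u v : ι → ℝ) : ℝ := ∑ i, u i * v i

/-- `p ∈ π_k`: real polynomials of degree at most `k` with value `1` at the origin. -/
def IsPik (k : ℕ) (p : Polynomial ℝ) : Prop := p.natDegree ≤ k ∧ p.eval 0 = 1

/-- `p ∈ π_{k,ℂ}`: complex polynomials of degree at most `k` with value `1` at the origin. -/
def IsPikC (k : ℕ) (p : Polynomial ℂ) : Prop := p.natDegree ≤ k ∧ p.eval 0 = 1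

/-- The `k`-th GMRES residual norm `min_{p ∈ π_k} ‖p(A)v‖`. -/
noncomputable def gmresVal {ι : Type*} [Fintype ι] [DecidableEq ι]
    (A : Matrix ι ι ℝ) (k : ℕ) (v : ι → ℝ) : ℝ :=
  sInf {s : ℝ | ∃ p : Polynomial ℝ, IsPik k p ∧ s = euclNorm ((Polynomial.aeval A p).mulVec v)}

/-- The `k`-th worst-case GMRES approximation `Ψ_k(A) = max_{‖v‖=1} min_{p ∈ π_k} ‖p(A)v‖`. -/
noncomputable def Psi {ι : Type*} [Fintype ι] [DecidableEq ι]
    (A : Matrix ι ι ℝ) (k : ℕ) : ℝ :=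
  sSup {r : ℝ | ∃ v : ι → ℝ, euclNorm v = 1 ∧ r = gmresVal A k v}

/-- `d(A)`: the degree of the minimal polynomial of `A`. -/
noncomputable def dA {ι : Type*} [Fintype ι] [DecidableEq ι] (A : Matrix ι ι ℝ) : ℕ :=
  (minpoly ℝ A).natDegree

/-- `d(A,b)`: the smallest degree of a nonzero polynomial `q` with `q(A)b = 0`. -/
noncomputable def dAb {ι : Type*} [Fintype ι] [DecidableEq ι]
    (A : Matrix ι ι ℝ) (b : ι → ℝ) : ℕ :=
  sInf {d : ℕ | ∃ q : Polynomial ℝ, q ≠ 0 ∧ q.natDegree = d ∧ (Polynomial.aeval A q).mulVec b = 0}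

/-- `r = GMRES(A,b,k)`: `r = p(A)b` for some `p ∈ π_k` minimizing `‖p(A)b‖` over `π_k`. -/
def IsGmresRes {ι : Type*} [Fintype ι] [DecidableEq ι]
    (A : Matrix ι ι ℝ) (k : ℕ) (b r : ι → ℝ) : Prop :=
  ∃ p : Polynomial ℝ, IsPik k p ∧ r = (Polynomial.aeval A p).mulVec b ∧
    ∀ q : Polynomial ℝ, IsPik k q → euclNorm r ≤ euclNorm ((Polynomial.aeval A q).mulVec b)

/-- `p` is the `k`-th GMRES polynomial of `A` and `b`: `p ∈ π_k` minimizes `‖p(A)b‖`. -/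
def IsGmresPoly {ι : Type*} [Fintype ι] [DecidableEq ι]
    (A : Matrix ι ι ℝ) (k : ℕ) (b : ι → ℝ) (p : Polynomial ℝ) : Prop :=
  IsPik k p ∧ ∀ q : Polynomial ℝ, IsPik k q →
    euclNorm ((Polynomial.aeval A p).mulVec b) ≤ euclNorm ((Polynomial.aeval A q).mulVec b)

/-- The Krylov subspace `K_k(A,b) = span{b, Ab, …, A^{k-1}b}`. -/
noncomputable def krylov {ι : Type*} [Fintype ι] [DecidableEq ι]
    (A : Matrix ι ι ℝ) (k : ℕ) (b : ι → ℝ) : Submodule ℝ (ι → ℝ) :=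
  Submodule.span ℝ (Set.range fun i : Fin k => (A ^ (i : ℕ)).mulVec b)

/-- `b` satisfies the cross equality for `A` and step `k`. -/
def CrossEq {ι : Type*} [Fintype ι] [DecidableEq ι]
    (A : Matrix ι ι ℝ) (k : ℕ) (b : ι → ℝ) : Prop :=
  ∀ r s : ι → ℝ, IsGmresRes A k b r → IsGmresRes Aᵀ k ((euclNorm r)⁻¹ • r) s →
    b = (euclNorm s)⁻¹ • s

/-- The Krylov matrix `K(v) = [Av, A²v, …, A^k v]`. -/
noncomputable def Kmat {n : ℕ} (A : Matrix (Fin n) (Fin n) ℝ) (k : ℕ) (v : Fin n → ℝ) :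
    Matrix (Fin n) (Fin k) ℝ :=
  Matrix.of fun i j => (A ^ ((j : ℕ) + 1)).mulVec v i

/-- `γ(v) = (K(v)ᵀK(v))⁻¹ K(v)ᵀ v`. -/
noncomputable def gammaVec {n : ℕ} (A : Matrix (Fin n) (Fin n) ℝ) (k : ℕ) (v : Fin n → ℝ) :
    Fin k → ℝ :=
  ((Kmat A k v)ᵀ * Kmat A k v)⁻¹ *ᵥ ((Kmat A k v)ᵀ *ᵥ v)

/-- `g(v) = min_{c ∈ ℝ^k} ‖v - K(v)c‖²`. -/
noncomputable def gFun {n : ℕ} (A : Matrix (Fin n) (Fin n) ℝ) (k : ℕ) (v : Fin n → ℝ) : ℝ :=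
  sInf {s : ℝ | ∃ c : Fin k → ℝ, s = euclNorm (v - Kmat A k v *ᵥ c) ^ 2}

/-- `p(z; c) = 1 - ∑_{j=1}^k c_j z^j`. -/
noncomputable def pPoly {k : ℕ} (c : Fin k → ℝ) : Polynomial ℝ :=
  1 - ∑ j : Fin k, Polynomial.C (c j) * Polynomial.X ^ ((j : ℕ) + 1)

/-- `f(c,v) = ‖p(A;c)v‖²`. -/
noncomputable def fFun {n k : ℕ} (A : Matrix (Fin n) (Fin n) ℝ) (c : Fin k → ℝ)
    (v : Fin n → ℝ) : ℝ :=
  euclNorm ((Polynomial.aeval A (pPoly c)).mulVec v) ^ 2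

/-- `F(c,v) = f(c,v)/(vᵀv)`. -/
noncomputable def FFun {n k : ℕ} (A : Matrix (Fin n) (Fin n) ℝ) (c : Fin k → ℝ)
    (v : Fin n → ℝ) : ℝ :=
  fFun A c v / edot v v

/-- The Toh matrix `A(ω, ε)`. -/
noncomputable def tohMatrix (ω ε : ℝ) : Matrix (Fin 4) (Fin 4) ℝ :=
  !![1, ε, 0, 0; 0, -1, ω / ε, 0; 0, 0, 1, ε; 0, 0, 0, -1]

/-- `p` is a `k`-th worst-case GMRES polynomial of `A`. -/
def IsWCPoly {ι : Type*} [Fintype ι] [DecidableEq ι]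
    (A : Matrix ι ι ℝ) (k : ℕ) (p : Polynomial ℝ) : Prop :=
  IsPik k p ∧ ∃ b : ι → ℝ, euclNorm b = 1 ∧
    (∀ q : Polynomial ℝ, IsPik k q →
      euclNorm ((Polynomial.aeval A p).mulVec b) ≤ euclNorm ((Polynomial.aeval A q).mulVec b)) ∧
    euclNorm ((Polynomial.aeval A p).mulVec b) = Psi A k

/-- The spectral (Euclidean operator) norm of a real matrix. -/
noncomputable def specNorm {ι : Type*} [Fintype ι] (M : Matrix ι ι ℝ) : ℝ :=
  sSup {r : ℝ | ∃ v : ι → ℝ, euclNorm v = 1 ∧ r = euclNorm (M *ᵥ v)}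

/-- The `k`-th ideal GMRES approximation `φ_k(A) = min_{p ∈ π_k} ‖p(A)‖`. -/
noncomputable def phiIdeal {ι : Type*} [Fintype ι] [DecidableEq ι]
    (A : Matrix ι ι ℝ) (k : ℕ) : ℝ :=
  sInf {r : ℝ | ∃ p : Polynomial ℝ, IsPik k p ∧ r = specNorm (Polynomial.aeval A p)}

/-- Complexification of a real matrix. -/
noncomputable def matC {ι : Type*} (A : Matrix ι ι ℝ) : Matrix ι ι ℂ :=
  A.map fun x => (x : ℂ)

/-- Complexification of a real vector. -/
noncomputable def vecC {ι : Type*} (b : ι → ℝ) : ι → ℂ := fun i => (b i : ℂ)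

/-- `Ψ_{k,ℂ,ℝ}(A)`: complex polynomials, real initial vectors. -/
noncomputable def PsiCR {ι : Type*} [Fintype ι] [DecidableEq ι]
    (A : Matrix ι ι ℝ) (k : ℕ) : ℝ :=
  sSup {r : ℝ | ∃ b : ι → ℝ, euclNorm b = 1 ∧
    r = sInf {s : ℝ | ∃ p : Polynomial ℂ, IsPikC k p ∧
      s = euclNormC ((Polynomial.aeval (matC A) p).mulVec (vecC b))}}

/-- `Ψ_{k,ℂ,ℂ}(A)`: complex polynomials, complex initial vectors. -/
noncomputable def PsiCC {ι : Type*} [Fintype ι] [DecidableEq ι]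
    (A : Matrix ι ι ℝ) (k : ℕ) : ℝ :=
  sSup {r : ℝ | ∃ b : ι → ℂ, euclNormC b = 1 ∧
    r = sInf {s : ℝ | ∃ p : Polynomial ℂ, IsPikC k p ∧
      s = euclNormC ((Polynomial.aeval (matC A) p).mulVec b)}}

/-- `Ψ_{k,ℝ,ℂ}(A)`: real polynomials, complex initial vectors. -/
noncomputable def PsiRC {ι : Type*} [Fintype ι] [DecidableEq ι]
    (A : Matrix ι ι ℝ) (k : ℕ) : ℝ :=
  sSup {r : ℝ | ∃ b : ι → ℂ, euclNormC b = 1 ∧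
    r = sInf {s : ℝ | ∃ p : Polynomial ℝ, IsPik k p ∧
      s = euclNormC ((Polynomial.aeval (matC A) (p.map (algebraMap ℝ ℂ))).mulVec b)}}

/-- `φ_{k,ℝ,ℝ}(A)`. -/
noncomputable def phiRR {ι : Type*} [Fintype ι] [DecidableEq ι]
    (A : Matrix ι ι ℝ) (k : ℕ) : ℝ :=
  sInf {r : ℝ | ∃ p : Polynomial ℝ, IsPik k p ∧
    r = sSup {s : ℝ | ∃ b : ι → ℝ, euclNorm b = 1 ∧
      s = euclNorm ((Polynomial.aeval A p).mulVec b)}}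

/-- `φ_{k,ℂ,ℝ}(A)`. -/
noncomputable def phiCR {ι : Type*} [Fintype ι] [DecidableEq ι]
    (A : Matrix ι ι ℝ) (k : ℕ) : ℝ :=
  sInf {r : ℝ | ∃ p : Polynomial ℂ, IsPikC k p ∧
    r = sSup {s : ℝ | ∃ b : ι → ℝ, euclNorm b = 1 ∧
      s = euclNormC ((Polynomial.aeval (matC A) p).mulVec (vecC b))}}

/-- `φ_{k,ℝ,ℂ}(A)`. -/
noncomputable def phiRC {ι : Type*} [Fintype ι] [DecidableEq ι]
    (A : Matrix ι ι ℝ) (k : ℕ) : ℝ :=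
  sInf {r : ℝ | ∃ p : Polynomial ℝ, IsPik k p ∧
    r = sSup {s : ℝ | ∃ b : ι → ℂ, euclNormC b = 1 ∧
      s = euclNormC ((Polynomial.aeval (matC A) (p.map (algebraMap ℝ ℂ))).mulVec b)}}

/-- `φ_{k,ℂ,ℂ}(A)`. -/
noncomputable def phiCC {ι : Type*} [Fintype ι] [DecidableEq ι]
    (A : Matrix ι ι ℝ) (k : ℕ) : ℝ :=
  sInf {r : ℝ | ∃ p : Polynomial ℂ, IsPikC k p ∧
    r = sSup {s : ℝ | ∃ b : ι → ℂ, euclNormC b = 1 ∧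
      s = euclNormC ((Polynomial.aeval (matC A) p).mulVec b)}}

/-!
If `z` is orthogonal to `A v, …, A ^ k v`, then `⟪v, z⟫ = ⟪q(A) v, z⟫` for every `q ∈ π_k`, hence
`⟪v, z⟫ ≤ Ψ ‖v‖ ‖z‖ ≤ (Ψ² ‖v‖² + ‖z‖²) / 2` with `Ψ = Ψ_k(A)`. A worst-case initial vector and its
residual `r = p_k(A) b` attain equality, so `(b, r)` maximizes
`⟪v, z⟫ - (Ψ² ‖v‖² + ‖z‖²) / 2` under the bilinear constraints `⟪A ^ j v, z⟫ = 0`. Swapping `v`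
and `z` transposes `A`, so one family of Lagrange multipliers `c` serves both stationarity
conditions: `p(A; c) b = r` and `p(Aᵀ; c) r = Ψ² b`. The first forces `p(·; c) = p_k` when `r ≠ 0`.
Minimality for `Aᵀ` is then Cauchy–Schwarz: `‖r‖² = ⟪b, q(Aᵀ) r⟫ ≤ ‖q(Aᵀ) r‖` for `q ∈ π_k`.
-/

open scoped RealInnerProductSpace

section InnerProductSpace

variable {E F : Type*} [NormedAddCommGroup E] [InnerProductSpace ℝ E]
  [NormedAddCommGroup F] [InnerProductSpace ℝ F]

lemma real_inner_eq_zero_of_forall_norm_le_norm_add_smul {x y : E}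
    (h : ∀ t : ℝ, ‖x‖ ≤ ‖x + t • y‖) : ⟪x, y⟫ = 0 := by
  have hquad : ∀ t : ℝ, 0 ≤ ‖y‖ ^ 2 * (t * t) + 2 * ⟪x, y⟫ * t + 0 := fun t => by
    have hsq : ‖x‖ ^ 2 ≤ ‖x + t • y‖ ^ 2 := by gcongr; exact h t
    rw [norm_add_sq_real, norm_smul, mul_pow, inner_smul_right, Real.norm_eq_abs, sq_abs] at hsq
    linarith
  have hdiscrim := discrim_le_zero hquad
  rw [discrim, mul_zero, sub_zero] at hdiscrim
  have := pow_eq_zero_iff two_ne_zero |>.mp (le_antisymm hdiscrim (sq_nonneg _))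
  linarith

variable [CompleteSpace E] [CompleteSpace F]

lemma hasStrictFDerivAt_inner_clm_apply (M : E →L[ℝ] F) (x : E × F) :
    HasStrictFDerivAt (fun y : E × F => ⟪M y.1, y.2⟫)
      ((innerSL ℝ (M.adjoint x.2)).coprod (innerSL ℝ (M x.1))) x := by
  have h := (M.hasStrictFDerivAt.comp x hasStrictFDerivAt_fst).inner ℝ
    (hasStrictFDerivAt_snd (𝕜 := ℝ) (p := x))
  refine h.congr_fderiv (ContinuousLinearMap.ext fun y => ?_)
  simp [ContinuousLinearMap.adjoint_inner_left, real_inner_comm, add_comm]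

lemma hasStrictFDerivAt_inner_clm_apply_sub_half_norm_sq (M : E →L[ℝ] F) (μ : ℝ) (x : E × F) :
    HasStrictFDerivAt (fun y : E × F => ⟪M y.1, y.2⟫ - 2⁻¹ * (μ * ‖y.1‖ ^ 2 + ‖y.2‖ ^ 2))
      ((innerSL ℝ (M.adjoint x.2 - μ • x.1)).coprod (innerSL ℝ (M x.1 - x.2))) x := by
  have h := (hasStrictFDerivAt_inner_clm_apply M x).sub
    (((((hasStrictFDerivAt_norm_sq x.1).comp x hasStrictFDerivAt_fst).const_mul μ).add
      ((hasStrictFDerivAt_norm_sq x.2).comp x hasStrictFDerivAt_snd)).const_mul 2⁻¹)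
  refine h.congr_fderiv (ContinuousLinearMap.ext fun y => ?_)
  simp only [ContinuousLinearMap.smul_comp, smul_add, _root_.sub_apply,
    ContinuousLinearMap.coprod_apply, coe_innerSL_apply, _root_.add_apply, _root_.smul_apply,
    ContinuousLinearMap.comp_apply, ContinuousLinearMap.coe_fst', ContinuousLinearMap.coe_snd',
    smul_eq_mul, nsmul_eq_mul, Nat.cast_ofNat, map_sub, map_smul]
  ring

lemma exists_lagrange_multipliers_of_forall_inner_le {ι : Type*} [Fintype ι] {M : E →L[ℝ] F}
    {B : ι → E →L[ℝ] F} {μ : ℝ} {b : E} {r : F} (horth : ∀ i, ⟪B i b, r⟫ = 0)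
    (hle : ∀ v z, (∀ i, ⟪B i v, z⟫ = 0) → ⟪M v, z⟫ ≤ 2⁻¹ * (μ * ‖v‖ ^ 2 + ‖z‖ ^ 2))
    (heq : ⟪M b, r⟫ = 2⁻¹ * (μ * ‖b‖ ^ 2 + ‖r‖ ^ 2)) :
    ∃ (c : ι → ℝ) (a : ℝ), (c, a) ≠ 0 ∧ ∑ i, c i • B i b = a • (M b - r) ∧
      ∑ i, c i • (B i).adjoint r = a • (M.adjoint r - μ • b) := by
  have hmax : IsMaxOn (fun x : E × F => ⟪M x.1, x.2⟫ - 2⁻¹ * (μ * ‖x.1‖ ^ 2 + ‖x.2‖ ^ 2))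
      {x | ∀ i, ⟪B i x.1, x.2⟫ = ⟪B i b, r⟫} (b, r) := fun x hx => by
    have hx_le := hle x.1 x.2 fun i => (hx i).trans (horth i)
    simp only [Set.mem_ofPred_eq]
    linarith
  obtain ⟨c, a, hne, hsum⟩ := IsLocalExtrOn.exists_multipliers_of_hasStrictFDerivAt
    (.inr hmax.localize) (fun i => hasStrictFDerivAt_inner_clm_apply (B i) (b, r))
    (hasStrictFDerivAt_inner_clm_apply_sub_half_norm_sq M μ (b, r))
  refine ⟨c, -a, by simpa using hne, ?_, ?_⟩ <;>
    rw [neg_smul, eq_neg_iff_add_eq_zero] <;>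
    refine ext_inner_right ℝ fun y => ?_
  · simpa [sum_inner, inner_add_left, inner_smul_left, inner_sub_left]
      using DFunLike.congr_fun hsum (0, y)
  · simpa [sum_inner, inner_add_left, inner_smul_left, inner_sub_left]
      using DFunLike.congr_fun hsum (y, 0)

lemma exists_sub_sum_smul_apply_eq_of_forall_inner_le {ι : Type*} [Fintype ι] {M : E →L[ℝ] F}
    {B : ι → E →L[ℝ] F} {μ : ℝ} {b : E} {r : F} (hind : LinearIndependent ℝ fun i => B i b)
    (horth : ∀ i, ⟪B i b, r⟫ = 0)
    (hle : ∀ v z, (∀ i, ⟪B i v, z⟫ = 0) → ⟪M v, z⟫ ≤ 2⁻¹ * (μ * ‖v‖ ^ 2 + ‖z‖ ^ 2))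
    (heq : ⟪M b, r⟫ = 2⁻¹ * (μ * ‖b‖ ^ 2 + ‖r‖ ^ 2)) :
    ∃ c : ι → ℝ, (M - ∑ i, c i • B i) b = r ∧ (M - ∑ i, c i • B i).adjoint r = μ • b := by
  obtain ⟨c, a, hne, hb, hr⟩ := exists_lagrange_multipliers_of_forall_inner_le horth hle heq
  have ha : a ≠ 0 := by
    rintro rfl
    rw [zero_smul] at hb
    exact hne (by simpa [funext_iff] using Fintype.linearIndependent_iff.mp hind c hb)
  refine ⟨a⁻¹ • c, ?_, ?_⟩
  · simp [mul_smul, ← Finset.smul_sum, hb, ha]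
  · simp [mul_smul, ← Finset.smul_sum, hr, ha]

end InnerProductSpace

section Euclidean

variable {ι : Type*} [Fintype ι]

lemma euclNorm_eq_norm_toLp (v : ι → ℝ) : euclNorm v = ‖WithLp.toLp 2 v‖ := by
  simp [euclNorm, EuclideanSpace.norm_eq]

lemma dotProduct_eq_inner_toLp (u v : ι → ℝ) :
    u ⬝ᵥ v = ⟪WithLp.toLp 2 u, WithLp.toLp 2 v⟫ := by
  simp [EuclideanSpace.inner_toLp_toLp, dotProduct_comm]

lemma euclNorm_nonneg (v : ι → ℝ) : 0 ≤ euclNorm v :=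
  Real.sqrt_nonneg _

lemma euclNorm_eq_zero {v : ι → ℝ} : euclNorm v = 0 ↔ v = 0 := by
  simp [euclNorm_eq_norm_toLp]

lemma euclNorm_smul (a : ℝ) (v : ι → ℝ) : euclNorm (a • v) = |a| * euclNorm v := by
  simp [euclNorm_eq_norm_toLp, norm_smul]

lemma dotProduct_self_eq_euclNorm_sq (v : ι → ℝ) : v ⬝ᵥ v = euclNorm v ^ 2 := by
  rw [dotProduct_eq_inner_toLp, real_inner_self_eq_norm_sq, euclNorm_eq_norm_toLp]

lemma dotProduct_le_euclNorm_mul_euclNorm (u v : ι → ℝ) :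
    u ⬝ᵥ v ≤ euclNorm u * euclNorm v := by
  simpa only [dotProduct_eq_inner_toLp, euclNorm_eq_norm_toLp] using real_inner_le_norm _ _

lemma exists_sub_sum_smul_mulVec_eq_of_forall_dotProduct_le {κ : Type*} [Fintype κ]
    {M : Matrix ι ι ℝ} {B : κ → Matrix ι ι ℝ} {μ : ℝ} {b r : ι → ℝ}
    (hind : LinearIndependent ℝ fun j => B j *ᵥ b) (horth : ∀ j, (B j *ᵥ b) ⬝ᵥ r = 0)
    (hle : ∀ v z, (∀ j, (B j *ᵥ v) ⬝ᵥ z = 0) →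
      (M *ᵥ v) ⬝ᵥ z ≤ 2⁻¹ * (μ * euclNorm v ^ 2 + euclNorm z ^ 2))
    (heq : (M *ᵥ b) ⬝ᵥ r = 2⁻¹ * (μ * euclNorm b ^ 2 + euclNorm r ^ 2)) :
    ∃ c : κ → ℝ, (M - ∑ j, c j • B j) *ᵥ b = r ∧ (M - ∑ j, c j • B j)ᵀ *ᵥ r = μ • b := by
  classical
  simp only [dotProduct_eq_inner_toLp, euclNorm_eq_norm_toLp] at horth hle heq
  let T := toEuclideanCLM (n := ι) (𝕜 := ℝ)
  have hadj (N : Matrix ι ι ℝ) : (T N).adjoint = T Nᵀ := by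
    rw [← conjTranspose_eq_transpose_of_trivial]
    exact (map_star T N).symm
  obtain ⟨c, hc, hcT⟩ := exists_sub_sum_smul_apply_eq_of_forall_inner_le (M := T M)
    (B := fun j => T (B j)) (b := WithLp.toLp 2 b) (r := WithLp.toLp 2 r)
    (hind.map' (WithLp.linearEquiv 2 ℝ (ι → ℝ)).symm.toLinearMap (LinearEquiv.ker _))
    horth (fun v z => hle v.ofLp z.ofLp) heq
  simp only [← map_smul, ← map_sum, ← map_sub, hadj] at hc hcT
  exact ⟨c, congrArg WithLp.ofLp hc, congrArg WithLp.ofLp hcT⟩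

end Euclidean

section Polynomials

lemma aeval_transpose {ι R : Type*} [Fintype ι] [DecidableEq ι] [CommSemiring R]
    (A : Matrix ι ι R) (p : R[X]) : aeval Aᵀ p = (aeval A p)ᵀ := by
  simp [aeval_eq_sum_range, Matrix.transpose_sum, Matrix.transpose_pow]

lemma isPik_one (k : ℕ) : IsPik k 1 := by
  simp [IsPik]

lemma IsPik.add {k : ℕ} {p e : ℝ[X]} (hp : IsPik k p) (he : e.natDegree ≤ k)
    (he0 : e.eval 0 = 0) : IsPik k (p + e) :=
  ⟨natDegree_add_le_of_degree_le hp.1 he, by simp [hp.2, he0]⟩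

lemma isPik_C_inv_mul {k : ℕ} {e : ℝ[X]} (he : e.natDegree ≤ k) (he0 : e.eval 0 ≠ 0) :
    IsPik k (C (e.eval 0)⁻¹ * e) :=
  ⟨(natDegree_C_mul_le _ _).trans he, by simp [he0]⟩

lemma natDegree_pPoly_le {k : ℕ} (c : Fin k → ℝ) : (pPoly c).natDegree ≤ k :=
  (natDegree_sub_le_iff_right (by simp)).mpr <|
    natDegree_sum_le_of_forall_le _ _ fun j _ => (natDegree_C_mul_X_pow_le _ _).trans j.2

lemma coeff_pPoly_succ {k : ℕ} (c : Fin k → ℝ) (j : Fin k) :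
    (pPoly c).coeff (j + 1) = -c j := by
  simp [pPoly, finsetSum_coeff, coeff_X_pow, coeff_one, Fin.val_inj]

lemma aeval_pPoly {R : Type*} [Ring R] [Algebra ℝ R] (a : R) {k : ℕ} (c : Fin k → ℝ) :
    aeval a (pPoly c) = 1 - ∑ j, c j • a ^ ((j : ℕ) + 1) := by
  simp [pPoly, Algebra.smul_def]

end Polynomials

section Gmres

variable {ι : Type*} [Fintype ι] [DecidableEq ι] {A : Matrix ι ι ℝ} {k : ℕ} {b : ι → ℝ}
  {p : ℝ[X]}

lemma gmresVal_le {q : ℝ[X]} (hq : IsPik k q) : gmresVal A k b ≤ euclNorm (aeval A q *ᵥ b) :=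
  csInf_le ⟨0, by rintro _ ⟨p, -, rfl⟩; exact euclNorm_nonneg _⟩ ⟨q, hq, rfl⟩

lemma le_gmresVal {s : ℝ} (h : ∀ q, IsPik k q → s ≤ euclNorm (aeval A q *ᵥ b)) :
    s ≤ gmresVal A k b :=
  le_csInf ⟨_, 1, isPik_one k, rfl⟩ (by rintro _ ⟨q, hq, rfl⟩; exact h q hq)

lemma gmresVal_le_euclNorm : gmresVal A k b ≤ euclNorm b := by
  simpa using gmresVal_le (A := A) (b := b) (isPik_one k)

lemma gmresVal_smul_le (a : ℝ) : |a| * gmresVal A k b ≤ gmresVal A k (a • b) :=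
  le_gmresVal fun q hq => by
    rw [mulVec_smul, euclNorm_smul]
    gcongr
    exact gmresVal_le hq

lemma gmresVal_le_Psi (hb : euclNorm b = 1) : gmresVal A k b ≤ Psi A k :=
  le_csSup ⟨1, by rintro _ ⟨v, hv, rfl⟩; exact hv ▸ gmresVal_le_euclNorm⟩ ⟨b, hb, rfl⟩

lemma gmresVal_le_Psi_mul_euclNorm : gmresVal A k b ≤ Psi A k * euclNorm b := by
  rcases (euclNorm_nonneg b).eq_or_lt with h0 | hpos
  · exact gmresVal_le_euclNorm.trans (by simp [← h0])
  · have hunit : euclNorm ((euclNorm b)⁻¹ • b) = 1 := by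
      rw [euclNorm_smul, abs_of_pos (inv_pos.mpr hpos), inv_mul_cancel₀ hpos.ne']
    have h := (gmresVal_smul_le _).trans (gmresVal_le_Psi (A := A) (k := k) hunit)
    rwa [abs_of_pos (inv_pos.mpr hpos), inv_mul_le_iff₀ hpos, mul_comm] at h

lemma aeval_mulVec_dotProduct_of_orthogonal {v z : ι → ℝ}
    (horth : ∀ j : Fin k, (A ^ ((j : ℕ) + 1) *ᵥ v) ⬝ᵥ z = 0) {q : ℝ[X]} (hq : IsPik k q) :
    (aeval A q *ᵥ v) ⬝ᵥ z = v ⬝ᵥ z := by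
  have hcoeff : q.coeff 0 = 1 := by rw [coeff_zero_eq_eval_zero, hq.2]
  rw [aeval_eq_sum_range' (Nat.lt_succ_of_le hq.1), Finset.sum_range_succ', Finset.sum_range]
  simp [add_mulVec, sum_mulVec, smul_mulVec, sum_dotProduct, horth, hcoeff]

lemma dotProduct_le_Psi_mul {v z : ι → ℝ}
    (horth : ∀ j : Fin k, (A ^ ((j : ℕ) + 1) *ᵥ v) ⬝ᵥ z = 0) :
    v ⬝ᵥ z ≤ Psi A k * euclNorm v * euclNorm z := by
  rcases (euclNorm_nonneg z).eq_or_lt with h0 | hpos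
  · simp [euclNorm_eq_zero.mp h0.symm, euclNorm]
  · refine (div_le_iff₀ hpos).mp ((le_gmresVal fun q hq => ?_).trans gmresVal_le_Psi_mul_euclNorm)
    rw [div_le_iff₀ hpos, ← aeval_mulVec_dotProduct_of_orthogonal horth hq]
    exact dotProduct_le_euclNorm_mul_euclNorm _ _

lemma eq_zero_of_aeval_mulVec_eq_zero (hA : IsUnit A)
    (hne : ∀ q, IsPik k q → aeval A q *ᵥ b ≠ 0) (e : ℝ[X]) :
    e.natDegree ≤ k → aeval A e *ᵥ b = 0 → e = 0 := by
  induction e using Polynomial.recOnHorner with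
  | M0 => exact fun _ _ => rfl
  | MC f a hf ha _ =>
    intro hdeg he
    have heval : (f + C a).eval 0 ≠ 0 := by simpa [← coeff_zero_eq_eval_zero, hf] using ha
    refine absurd ?_ (hne _ (isPik_C_inv_mul hdeg heval))
    rw [map_mul, ← mulVec_mulVec, he, mulVec_zero]
  | MX f hf ih =>
    intro hdeg he
    rw [mul_comm, map_mul, aeval_X, ← mulVec_mulVec] at he
    rw [natDegree_mul_X hf] at hdeg
    have hfb : aeval A f *ᵥ b = 0 := mulVec_injective_of_isUnit hA (by rw [he, mulVec_zero])
    exact absurd (ih (Nat.le_of_succ_le hdeg) hfb) hf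

lemma linearIndependent_pow_succ_mulVec (hA : IsUnit A)
    (hne : ∀ q, IsPik k q → aeval A q *ᵥ b ≠ 0) :
    LinearIndependent ℝ fun j : Fin k => A ^ ((j : ℕ) + 1) *ᵥ b := by
  refine Fintype.linearIndependent_iff.mpr fun c hc j => ?_
  have hdeg : (1 - pPoly c).natDegree ≤ k :=
    (natDegree_sub_le_iff_left (natDegree_pPoly_le c)).mpr (by simp)
  have hzero := eq_zero_of_aeval_mulVec_eq_zero hA hne _ hdeg
    (by simpa [aeval_pPoly, sum_mulVec, smul_mulVec] using hc)
  simpa [coeff_one, coeff_pPoly_succ] using congrArg (coeff · ((j : ℕ) + 1)) hzero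

namespace IsGmresPoly

lemma dotProduct_eq_zero (hp : IsGmresPoly A k b p) {e : ℝ[X]} (he : e.natDegree ≤ k)
    (he0 : e.eval 0 = 0) : (aeval A p *ᵥ b) ⬝ᵥ (aeval A e *ᵥ b) = 0 := by
  rw [dotProduct_eq_inner_toLp]
  refine real_inner_eq_zero_of_forall_norm_le_norm_add_smul fun t => ?_
  have hle := hp.2 _ (hp.1.add ((natDegree_smul_le t e).trans he) (by simp [he0]))
  simpa [euclNorm_eq_norm_toLp, add_mulVec, smul_mulVec] using hle

lemma dotProduct_aeval_mulVec (hp : IsGmresPoly A k b p) {q : ℝ[X]} (hq : IsPik k q) :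
    (aeval A p *ᵥ b) ⬝ᵥ (aeval A q *ᵥ b) = euclNorm (aeval A p *ᵥ b) ^ 2 := by
  have h := hp.dotProduct_eq_zero ((natDegree_sub_le_iff_left hp.1.1).mpr hq.1)
    (by simp [hq.2, hp.1.2])
  rwa [map_sub, sub_mulVec, dotProduct_sub, sub_eq_zero, dotProduct_self_eq_euclNorm_sq] at h

lemma aeval_mulVec_ne_zero (hp : IsGmresPoly A k b p) (hr : aeval A p *ᵥ b ≠ 0) {q : ℝ[X]}
    (hq : IsPik k q) : aeval A q *ᵥ b ≠ 0 := by
  contrapose! hr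
  refine euclNorm_eq_zero.mp (le_antisymm ((hp.2 q hq).trans_eq ?_) (euclNorm_nonneg _))
  rw [hr, euclNorm_eq_zero]

lemma eq_of_aeval_mulVec_eq (hp : IsGmresPoly A k b p) (hA : IsUnit A)
    (hr : aeval A p *ᵥ b ≠ 0) {q : ℝ[X]} (hq : q.natDegree ≤ k)
    (h : aeval A q *ᵥ b = aeval A p *ᵥ b) : q = p :=
  sub_eq_zero.mp <| eq_zero_of_aeval_mulVec_eq_zero hA (fun _ => hp.aeval_mulVec_ne_zero hr) _
    ((natDegree_sub_le_iff_left hp.1.1).mpr hq) (by rw [map_sub, sub_mulVec, h, sub_self])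

lemma exists_aeval_pPoly_mulVec_eq (hp : IsGmresPoly A k b p) (hA : IsUnit A)
    (hr : aeval A p *ᵥ b ≠ 0) (hb : euclNorm b = 1)
    (hwc : euclNorm (aeval A p *ᵥ b) = Psi A k) :
    ∃ c : Fin k → ℝ, aeval A (pPoly c) *ᵥ b = aeval A p *ᵥ b ∧
      aeval Aᵀ (pPoly c) *ᵥ (aeval A p *ᵥ b) = Psi A k ^ 2 • b := by
  have horth (j : Fin k) : (A ^ ((j : ℕ) + 1) *ᵥ b) ⬝ᵥ (aeval A p *ᵥ b) = 0 := by
    rw [dotProduct_comm]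
    simpa using hp.dotProduct_eq_zero (e := X ^ ((j : ℕ) + 1)) (by simp) (by simp)
  have hle (v z : ι → ℝ) (hvz : ∀ j : Fin k, (A ^ ((j : ℕ) + 1) *ᵥ v) ⬝ᵥ z = 0) :
      ((1 : Matrix ι ι ℝ) *ᵥ v) ⬝ᵥ z ≤ 2⁻¹ * (Psi A k ^ 2 * euclNorm v ^ 2 + euclNorm z ^ 2) := by
    rw [one_mulVec]
    linarith [dotProduct_le_Psi_mul hvz, two_mul_le_add_sq (Psi A k * euclNorm v) (euclNorm z)]
  have heq : ((1 : Matrix ι ι ℝ) *ᵥ b) ⬝ᵥ (aeval A p *ᵥ b) =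
      2⁻¹ * (Psi A k ^ 2 * euclNorm b ^ 2 + euclNorm (aeval A p *ᵥ b) ^ 2) := by
    have h := hp.dotProduct_aeval_mulVec (isPik_one k)
    rw [map_one, dotProduct_comm] at h
    rw [h, hwc, hb]
    ring
  simpa only [aeval_transpose, aeval_pPoly] using
    exists_sub_sum_smul_mulVec_eq_of_forall_dotProduct_le
      (linearIndependent_pow_succ_mulVec hA fun _ => hp.aeval_mulVec_ne_zero hr) horth hle heq

lemma aeval_transpose_mulVec_eq (hp : IsGmresPoly A k b p) (hA : IsUnit A)
    (hr : aeval A p *ᵥ b ≠ 0) (hb : euclNorm b = 1)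
    (hwc : euclNorm (aeval A p *ᵥ b) = Psi A k) :
    aeval Aᵀ p *ᵥ (aeval A p *ᵥ b) = Psi A k ^ 2 • b := by
  obtain ⟨c, hc, hcT⟩ := hp.exists_aeval_pPoly_mulVec_eq hA hr hb hwc
  rwa [hp.eq_of_aeval_mulVec_eq hA hr (natDegree_pPoly_le c) hc] at hcT

lemma smul (hp : IsGmresPoly A k b p) (a : ℝ) : IsGmresPoly A k (a • b) p :=
  ⟨hp.1, fun q hq => by
    rw [mulVec_smul, mulVec_smul, euclNorm_smul, euclNorm_smul]
    gcongr
    exact hp.2 q hq⟩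

lemma transpose_of_aeval_transpose_mulVec_eq (hp : IsGmresPoly A k b p) (hb : euclNorm b = 1)
    (h : aeval Aᵀ p *ᵥ (aeval A p *ᵥ b) = euclNorm (aeval A p *ᵥ b) ^ 2 • b) :
    IsGmresPoly Aᵀ k (aeval A p *ᵥ b) p :=
  ⟨hp.1, fun q hq => calc
    euclNorm (aeval Aᵀ p *ᵥ (aeval A p *ᵥ b)) = euclNorm (aeval A p *ᵥ b) ^ 2 := by
      rw [h, euclNorm_smul, hb, mul_one, abs_of_nonneg (sq_nonneg _)]
    _ = b ⬝ᵥ (aeval Aᵀ q *ᵥ (aeval A p *ᵥ b)) := by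
      rw [← hp.dotProduct_aeval_mulVec hq, aeval_transpose, dotProduct_transpose_mulVec]
    _ ≤ euclNorm (aeval Aᵀ q *ᵥ (aeval A p *ᵥ b)) := by
      simpa [hb] using dotProduct_le_euclNorm_mul_euclNorm b _⟩

end IsGmresPoly

end Gmres

/-- If `b` is a unit norm `k`-th worst-case GMRES initial vector with
worst-case GMRES polynomial `p_k` and residual `r = p_k(A)b`, then `p_k` is also the
`k`-th GMRES polynomial of `Aᵀ` and `r/‖r‖`, and `p_k(Aᵀ)p_k(A)b = Ψ_k(A)² b`. -/
theorem worst_case_polynomial_transpose {n : ℕ} (A : Matrix (Fin n) (Fin n) ℝ)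
    (hA : IsUnit A) (k : ℕ) (hk1 : 1 ≤ k) (hk2 : k ≤ dA A - 1)
    (b : Fin n → ℝ) (hb : euclNorm b = 1)
    (pk : Polynomial ℝ) (hpk : IsGmresPoly A k b pk)
    (hwc : euclNorm ((Polynomial.aeval A pk).mulVec b) = Psi A k)
    (r : Fin n → ℝ) (hr : r = (Polynomial.aeval A pk).mulVec b) :
    IsGmresPoly Aᵀ k ((euclNorm r)⁻¹ • r) pk ∧
    (Polynomial.aeval Aᵀ pk).mulVec ((Polynomial.aeval A pk).mulVec b)
      = (Psi A k ^ 2) • b := by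
  have hsq : aeval Aᵀ pk *ᵥ (aeval A pk *ᵥ b) = Psi A k ^ 2 • b := by
    by_cases h0 : aeval A pk *ᵥ b = 0
    · simp [← hwc, h0, euclNorm_eq_zero.mpr rfl]
    · exact hpk.aeval_transpose_mulVec_eq hA h0 hb hwc
  rw [hr]
  exact ⟨(hpk.transpose_of_aeval_transpose_mulVec_eq hb (hwc ▸ hsq)).smul _, hsq⟩
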